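/- arXiv:nlin/0004008 — 4 statements merged into one kernel-verified Lean document; each statement's English description precedes it below -/
import Mathlib

section
/- Let n ∈ ℕ and assume the Thirring polynomial system holds on a connected open set Ω. Suppose in addition that G(z,x,t)² − z F(z,x,t) H(z,x,t) = ∏_{m=0}^{2n+1}(z − E_m) for all z ∈ ℂ and (x,t) ∈ Ω, where E₀,…,E_{2n+1} ∈ ℂ, and that H(z,x,t) = 2 v⁎(x,t) ∏_{j=1}^n (z − ν_j(x,t)) with v⁎ nonvanishing and the ν_j differentiable on Ω. Set c₁ = −(1/2) Σ_{m=0}^{2n+1} E_m and g_{n+1} = G(0,·,·). Then the trace formulas hold on Ω: (i) i v⁎_x/v⁎ − 2 v v⁎ + 2 c₁ = −2 Σ_{j=1}^n ν_j; (ii) if all ν_j are nonvanishing, then i v⁎_x/v⁎ + 2 v v⁎ = −i Σ_{j=1}^n ν_{j,x}/ν_j − 2 (−1)^n g_{n+1} / ∏_{j=1}^n ν_j; (iii) g_{n+1} u⁎ = (−1)^n v⁎ ∏_{j=1}^n ν_j. -/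
/-!
At a fixed point of `Ω` the equations of the system are identities between polynomials in `z`, so
coefficients may be compared.

* The coefficients of `z ^ (n + 1)` in the `x`-equations for `F` and `H` give `f₀ = -2 v` and
  `h₀ = 2 v⁎`. In particular `v⁎` is differentiable in `x`.
* The coefficient of `z ^ n` in the `x`-equation for `H` expresses `v⁎_x / v⁎` through `v v⁎`, `g₁`
  and `h₁ = -2 v⁎ ∑ ν_j`; the coefficient of `z ^ (2 n + 1)` in `G² - z F H = ∏ (z - E_m)` gives
  `2 g₁ + 4 v v⁎ = 2 c₁`. Together these are the first trace formula.
* At `z = 0` the `x`-equation for `H` is an identity for the derivative of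
  `H(0) = (-1) ^ n 2 v⁎ ∏ ν_j`; dividing by `H(0)` turns it into the second formula.
* At `z = 0` the `t`-equation for `H` degenerates to `H(0) = 2 u⁎ G(0)`, which is the third.
-/

noncomputable section

open Complex

/-- Partial derivative of a function of two real variables with respect to
the first (the `x`) variable. -/
def pdx (f : ℝ → ℝ → ℂ) (x t : ℝ) : ℂ := deriv (fun x' => f x' t) x

/-- Partial derivative of a function of two real variables with respect to
the second (the `t`) variable. -/
def pdt (f : ℝ → ℝ → ℂ) (x t : ℝ) : ℂ := deriv (fun t' => f x t') t

/-- The data of the Thirring polynomial setup: functions `u, v, u⁎, v⁎` on `Ω ⊆ ℝ²`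
and the coefficients of the `z`-polynomials `F`, `H` (degree `n`) and `G`
(degree `n+1`, with leading coefficient `gc 0 ≡ 1`), all coefficients
differentiable on `Ω` in each variable. -/
structure ThirringData (n : ℕ) (Ω : Set (ℝ × ℝ)) where
  u : ℝ → ℝ → ℂ
  v : ℝ → ℝ → ℂ
  us : ℝ → ℝ → ℂ
  vs : ℝ → ℝ → ℂ
  f : ℕ → ℝ → ℝ → ℂ
  h : ℕ → ℝ → ℝ → ℂ
  gc : ℕ → ℝ → ℝ → ℂ
  hg0 : ∀ x t : ℝ, gc 0 x t = 1
  f_diff_x : ∀ (j : ℕ) (x t : ℝ), (x, t) ∈ Ω → DifferentiableAt ℝ (fun x' => f j x' t) x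
  f_diff_t : ∀ (j : ℕ) (x t : ℝ), (x, t) ∈ Ω → DifferentiableAt ℝ (fun t' => f j x t') t
  h_diff_x : ∀ (j : ℕ) (x t : ℝ), (x, t) ∈ Ω → DifferentiableAt ℝ (fun x' => h j x' t) x
  h_diff_t : ∀ (j : ℕ) (x t : ℝ), (x, t) ∈ Ω → DifferentiableAt ℝ (fun t' => h j x t') t
  gc_diff_x : ∀ (j : ℕ) (x t : ℝ), (x, t) ∈ Ω → DifferentiableAt ℝ (fun x' => gc j x' t) x
  gc_diff_t : ∀ (j : ℕ) (x t : ℝ), (x, t) ∈ Ω → DifferentiableAt ℝ (fun t' => gc j x t') t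

namespace ThirringData

variable {n : ℕ} {Ω : Set (ℝ × ℝ)}

/-- `F(z,x,t) = Σ_{j=0}^n f_{n-j}(x,t) z^j`. -/
def F (S : ThirringData n Ω) (z : ℂ) (x t : ℝ) : ℂ :=
  ∑ j ∈ Finset.range (n + 1), S.f (n - j) x t * z ^ j

/-- `H(z,x,t) = Σ_{j=0}^n h_{n-j}(x,t) z^j`. -/
def Hp (S : ThirringData n Ω) (z : ℂ) (x t : ℝ) : ℂ :=
  ∑ j ∈ Finset.range (n + 1), S.h (n - j) x t * z ^ j

/-- `G(z,x,t) = Σ_{j=0}^{n+1} g_{n+1-j}(x,t) z^j`. -/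
def G (S : ThirringData n Ω) (z : ℂ) (x t : ℝ) : ℂ :=
  ∑ j ∈ Finset.range (n + 2), S.gc (n + 1 - j) x t * z ^ j

/-- The six equations of the Thirring polynomial system, as identities in
`z ∈ ℂ` and `(x,t) ∈ Ω`. -/
def System (S : ThirringData n Ω) : Prop :=
  (∀ (z : ℂ) (x t : ℝ), (x, t) ∈ Ω →
    pdx (S.F z) x t =
      -2 * I * (S.v x t * S.vs x t - z) * S.F z x t + 4 * I * S.v x t * S.G z x t) ∧
  (∀ (z : ℂ) (x t : ℝ), (x, t) ∈ Ω →
    pdx (S.G z) x t = 2 * I * z * (S.vs x t * S.F z x t + S.v x t * S.Hp z x t)) ∧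
  (∀ (z : ℂ) (x t : ℝ), (x, t) ∈ Ω →
    pdx (S.Hp z) x t =
      2 * I * (S.v x t * S.vs x t - z) * S.Hp z x t + 4 * I * S.vs x t * S.G z x t) ∧
  (∀ (z : ℂ) (x t : ℝ), (x, t) ∈ Ω →
    z * pdt (S.F z) x t =
      -2 * I * (z * S.u x t * S.us x t - 1) * S.F z x t + 4 * I * S.u x t * S.G z x t) ∧
  (∀ (z : ℂ) (x t : ℝ), (x, t) ∈ Ω →
    pdt (S.G z) x t = 2 * I * (S.us x t * S.F z x t + S.u x t * S.Hp z x t)) ∧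
  (∀ (z : ℂ) (x t : ℝ), (x, t) ∈ Ω →
    z * pdt (S.Hp z) x t =
      2 * I * (z * S.u x t * S.us x t - 1) * S.Hp z x t + 4 * I * S.us x t * S.G z x t)

end ThirringData

open Polynomial in
/-- The polynomial `∑ j ≤ m, a (m - j) X ^ j`: the coefficients `a` are listed from the top degree
downwards, as in `F`, `G` and `H`. -/
def descPoly (m : ℕ) (a : ℕ → ℂ) : ℂ[X] :=
  ∑ j ∈ Finset.range (m + 1), C (a (m - j)) * X ^ j

lemma descPoly_eval (m : ℕ) (a : ℕ → ℂ) (z : ℂ) :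
    (descPoly m a).eval z = ∑ j ∈ Finset.range (m + 1), a (m - j) * z ^ j := by
  simp [descPoly, Polynomial.eval_finsetSum]

lemma descPoly_coeff (m : ℕ) (a : ℕ → ℂ) (k : ℕ) :
    (descPoly m a).coeff k = if k ≤ m then a (m - k) else 0 := by
  simp [descPoly, Polynomial.finsetSum_coeff, Polynomial.coeff_C_mul, Polynomial.coeff_X_pow]

lemma descPoly_natDegree_le (m : ℕ) (a : ℕ → ℂ) : (descPoly m a).natDegree ≤ m := by
  rw [Polynomial.natDegree_le_iff_coeff_eq_zero]
  intro k hk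
  rw [descPoly_coeff, if_neg (by omega)]

/-- The second highest coefficient of `G² - z F H` for monic `G`; the degree is `2 n + 2`. -/
lemma coeff_sq_sub (n : ℕ) (f g h : ℕ → ℂ) (hg : g 0 = 1) :
    (descPoly (n + 1) g ^ 2 - Polynomial.X * descPoly n f * descPoly n h).coeff (2 * n + 1)
      = 2 * g 1 - f 0 * h 0 := by
  have hmon : (descPoly (n + 1) g).Monic :=
    Polynomial.monic_of_natDegree_le_of_coeff_eq_one (n + 1) (descPoly_natDegree_le _ _)
      (by simp [descPoly_coeff, hg])
  have hdeg : (descPoly (n + 1) g).natDegree = n + 1 :=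
    Polynomial.natDegree_eq_of_le_of_coeff_ne_zero (descPoly_natDegree_le _ _)
      (by simp [descPoly_coeff, hg])
  have hnext : (descPoly (n + 1) g).nextCoeff = g 1 := by
    rw [Polynomial.nextCoeff_of_natDegree_pos (by omega), hdeg]
    simp [descPoly_coeff]
  have hsq : (descPoly (n + 1) g ^ 2).coeff (2 * n + 1) = 2 * g 1 := by
    have h2 := hmon.nextCoeff_pow 2
    have hd2 := hmon.natDegree_pow 2
    rw [hdeg] at hd2
    rw [Polynomial.nextCoeff_of_natDegree_pos (by omega), hd2, hnext] at h2
    simpa [show 2 * (n + 1) - 1 = 2 * n + 1 by omega] using h2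
  rw [Polynomial.coeff_sub, hsq, mul_assoc, Polynomial.coeff_X_mul, two_mul n,
    Polynomial.coeff_mul_add_eq_of_natDegree_le (descPoly_natDegree_le _ _) (descPoly_natDegree_le _ _)]
  simp [descPoly_coeff]

/-- Comparison of the coefficients of `z ^ (m + 1)` and `z ^ m` in an identity
`A' = (p + q z) A + r B`, the common shape of the `x`-equations for `F` and `H`. -/
lemma compare_coeff (m : ℕ) (a a' b : ℕ → ℂ) (p q r : ℂ)
    (key : ∀ z : ℂ, ∑ j ∈ Finset.range (m + 1), a' (m - j) * z ^ j
      = (p + q * z) * (∑ j ∈ Finset.range (m + 1), a (m - j) * z ^ j)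
        + r * ∑ j ∈ Finset.range (m + 2), b (m + 1 - j) * z ^ j) :
    0 = q * a 0 + r * b 0 ∧
    a' 0 = p * a 0 + q * (Polynomial.X * descPoly m a).coeff m + r * b 1 := by
  have hpoly : descPoly m a' = Polynomial.C p * descPoly m a
      + Polynomial.C q * (Polynomial.X * descPoly m a)
      + Polynomial.C r * descPoly (m + 1) b := by
    apply Polynomial.funext
    intro z
    simp only [Polynomial.eval_add, Polynomial.eval_mul, Polynomial.eval_C, Polynomial.eval_X,
      descPoly_eval]
    rw [key z]
    ring
  constructor
  · have := congrArg (fun P => Polynomial.coeff P (m + 1)) hpoly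
    simpa [descPoly_coeff, Polynomial.coeff_X_mul] using this
  · have := congrArg (fun P => Polynomial.coeff P m) hpoly
    simpa [descPoly_coeff] using this

/-- Termwise differentiation of a polynomial in `z` with `x`-dependent coefficients. -/
lemma pdx_sum (m : ℕ) (a : ℕ → ℝ → ℝ → ℂ) (z : ℂ) (x t : ℝ)
    (ha : ∀ j, DifferentiableAt ℝ (fun x' => a j x' t) x) :
    pdx (fun x t => ∑ j ∈ Finset.range (m + 1), a (m - j) x t * z ^ j) x t
      = ∑ j ∈ Finset.range (m + 1), pdx (a (m - j)) x t * z ^ j := by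
  unfold pdx
  rw [deriv_fun_sum (fun j _ => (ha _).mul_const _)]
  exact Finset.sum_congr rfl fun j _ => deriv_mul_const (ha _) _

namespace ThirringData

variable {n : ℕ} {Ω : Set (ℝ × ℝ)}

/-- Comparison of leading coefficients in the `x`-equation for `F`. -/
lemma f_zero (S : ThirringData n Ω) (hsys : S.System) {x t : ℝ} (hxt : (x, t) ∈ Ω) :
    S.f 0 x t = -2 * S.v x t := by
  have h := (compare_coeff n (fun j => S.f j x t) (fun j => pdx (S.f j) x t)
    (fun j => S.gc j x t) (-2 * I * (S.v x t * S.vs x t)) (2 * I) (4 * I * S.v x t) ?_).1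
  · simp only [S.hg0] at h
    have hI := I_ne_zero
    apply mul_left_cancel₀ (mul_ne_zero two_ne_zero hI)
    linear_combination -h
  · intro z
    have e := hsys.1 z x t hxt
    have d := pdx_sum n S.f z x t (fun j => S.f_diff_x j x t hxt)
    refine d.symm.trans (e.trans ?_)
    unfold F G
    ring

/-- Comparison of the two leading coefficients in the `x`-equation for `H`. -/
lemma h_zero (S : ThirringData n Ω) (hsys : S.System) {x t : ℝ} (hxt : (x, t) ∈ Ω) :
    S.h 0 x t = 2 * S.vs x t ∧
    pdx (S.h 0) x t = 2 * I * (S.v x t * S.vs x t) * S.h 0 x t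
      + -2 * I * (Polynomial.X * descPoly n (fun j => S.h j x t)).coeff n
      + 4 * I * S.vs x t * S.gc 1 x t := by
  obtain ⟨h, h'⟩ := compare_coeff n (fun j => S.h j x t) (fun j => pdx (S.h j) x t)
    (fun j => S.gc j x t) (2 * I * (S.v x t * S.vs x t)) (-2 * I) (4 * I * S.vs x t) (by
      intro z
      have e := hsys.2.2.1 z x t hxt
      have d := pdx_sum n S.h z x t (fun j => S.h_diff_x j x t hxt)
      refine d.symm.trans (e.trans ?_)
      unfold Hp G
      ring)
  refine ⟨?_, h'⟩
  simp only [S.hg0] at h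
  apply mul_left_cancel₀ (mul_ne_zero two_ne_zero I_ne_zero)
  linear_combination h

/-- Since `v⁎ = h₀ / 2` on the open set `Ω`, it inherits differentiability from `h₀`. -/
lemma hasDerivAt_vs (S : ThirringData n Ω) (hΩ : IsOpen Ω) (hsys : S.System) {x t : ℝ}
    (hxt : (x, t) ∈ Ω) :
    HasDerivAt (fun x' => S.vs x' t) (pdx S.vs x t) x ∧
    pdx (S.h 0) x t = 2 * pdx S.vs x t := by
  have hnear : ∀ᶠ x' in nhds x, (x', t) ∈ Ω :=
    (Continuous.prodMk_left t).continuousAt.eventually (hΩ.mem_nhds hxt)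
  have heq : (fun x' => S.vs x' t) =ᶠ[nhds x] fun x' => S.h 0 x' t / 2 := by
    filter_upwards [hnear] with x' hx'
    rw [(S.h_zero hsys hx').1]
    ring
  have hd : HasDerivAt (fun x' => S.vs x' t) (pdx (S.h 0) x t / 2) x :=
    ((S.h_diff_x 0 x t hxt).hasDerivAt.div_const 2).congr_of_eventuallyEq heq
  have hp : pdx S.vs x t = pdx (S.h 0) x t / 2 := hd.deriv
  refine ⟨hp ▸ hd, ?_⟩
  rw [hp]
  ring

end ThirringData

/-- trace formulas for `v⁎` in terms of the zeros `ν_j` of `H`. -/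
theorem statement13 {n : ℕ} (hn : 0 < n) {Ω : Set (ℝ × ℝ)} (hΩ : IsOpen Ω)
    (hconn : IsConnected Ω)
    (S : ThirringData n Ω) (hsys : S.System)
    (E : Fin (2 * n + 2) → ℂ)
    (hR : ∀ (z : ℂ) (x t : ℝ), (x, t) ∈ Ω →
      S.G z x t ^ 2 - z * S.F z x t * S.Hp z x t = ∏ m, (z - E m))
    (ν : Fin n → ℝ → ℝ → ℂ)
    (hHfac : ∀ (z : ℂ) (x t : ℝ), (x, t) ∈ Ω →
      S.Hp z x t = 2 * S.vs x t * ∏ j, (z - ν j x t))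
    (hvs : ∀ x t : ℝ, (x, t) ∈ Ω → S.vs x t ≠ 0)
    (hν_x : ∀ (j : Fin n) (x t : ℝ), (x, t) ∈ Ω →
      DifferentiableAt ℝ (fun x' => ν j x' t) x)
    (c₁ : ℂ) (hc₁ : c₁ = -(1 / 2) * ∑ m, E m) :
    (∀ x t : ℝ, (x, t) ∈ Ω →
      I * pdx S.vs x t / S.vs x t - 2 * S.v x t * S.vs x t + 2 * c₁
        = -2 * ∑ j, ν j x t) ∧
    ((∀ (j : Fin n) (x t : ℝ), (x, t) ∈ Ω → ν j x t ≠ 0) →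
      ∀ x t : ℝ, (x, t) ∈ Ω →
        I * pdx S.vs x t / S.vs x t + 2 * S.v x t * S.vs x t
          = -I * ∑ j, pdx (ν j) x t / ν j x t -
            2 * (-1 : ℂ) ^ n * S.G 0 x t / ∏ j, ν j x t) ∧
    (∀ x t : ℝ, (x, t) ∈ Ω →
      S.G 0 x t * S.us x t = (-1 : ℂ) ^ n * S.vs x t * ∏ j, ν j x t) := by
  refine ⟨?_, ?_, ?_⟩
  · intro x t hxt
    have hv := hvs x t hxt
    obtain ⟨h0, h1⟩ := S.h_zero hsys hxt
    have hf0 := S.f_zero hsys hxt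
    rw [(S.hasDerivAt_vs hΩ hsys hxt).2] at h1
    have hH : descPoly n (fun j => S.h j x t) = Polynomial.C (2 * S.vs x t) *
        ∏ j, (Polynomial.X - Polynomial.C (ν j x t)) := by
      apply Polynomial.funext
      intro z
      rw [descPoly_eval]
      refine (hHfac z x t hxt).trans ?_
      simp [Polynomial.eval_prod]
    have hsum : (Polynomial.X * descPoly n (fun j => S.h j x t)).coeff n
        = 2 * S.vs x t * -∑ j, ν j x t := by
      have hc := Polynomial.prod_X_sub_C_coeff_card_pred Finset.univ (fun j => ν j x t)
        (by simpa using hn)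
      obtain ⟨k, rfl⟩ : ∃ k, n = k + 1 := ⟨n - 1, by omega⟩
      rw [Finset.card_fin] at hc
      rw [hH, Polynomial.coeff_X_mul, Polynomial.coeff_C_mul]
      exact congrArg _ hc
    have hRp : descPoly (n + 1) (fun j => S.gc j x t) ^ 2
        - Polynomial.X * descPoly n (fun j => S.f j x t) * descPoly n (fun j => S.h j x t)
        = ∏ m, (Polynomial.X - Polynomial.C (E m)) := by
      apply Polynomial.funext
      intro z
      simp only [Polynomial.eval_sub, Polynomial.eval_mul, Polynomial.eval_pow, Polynomial.eval_X,
        descPoly_eval, Polynomial.eval_prod, Polynomial.eval_C]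
      exact hR z x t hxt
    have hE := Polynomial.prod_X_sub_C_coeff_card_pred Finset.univ E (by simp)
    rw [Finset.card_fin, ← hRp, show 2 * n + 2 - 1 = 2 * n + 1 by omega,
      coeff_sq_sub n _ _ _ (S.hg0 x t), hf0, h0] at hE
    rw [hsum, h0] at h1
    have hx : pdx S.vs x t = S.vs x t *
        (2 * I * (S.v x t * S.vs x t) + 2 * I * (∑ j, ν j x t) + 2 * I * S.gc 1 x t) := by
      linear_combination h1 / 2
    rw [hx, hc₁, mul_div_assoc, mul_div_cancel_left₀ _ hv]
    linear_combination (2 * S.v x t * S.vs x t + 2 * (∑ j, ν j x t) + 2 * S.gc 1 x t) * I_sq - hE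
  · intro hν x t hxt
    have hv := hvs x t hxt
    have hP : ∏ j, ν j x t ≠ 0 := Finset.prod_ne_zero_iff.2 fun j _ => hν j x t hxt
    have hsign : ((-1 : ℂ) ^ n) * (-1) ^ n = 1 := by rw [← mul_pow]; simp
    have hH0 : ∀ x' : ℝ, (x', t) ∈ Ω →
        S.Hp 0 x' t = 2 * (-1) ^ n * (S.vs x' t * ∏ j, ν j x' t) := by
      intro x' hx'
      rw [hHfac 0 x' t hx']
      simp only [zero_sub, Finset.prod_neg, Finset.card_fin]
      ring
    have hnear : ∀ᶠ x' in nhds x, (x', t) ∈ Ω :=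
      (Continuous.prodMk_left t).continuousAt.eventually (hΩ.mem_nhds hxt)
    have hprod : HasDerivAt (fun x' => ∏ j, ν j x' t)
        ((∏ j, ν j x t) * ∑ j, pdx (ν j) x t / ν j x t) x := by
      have h := HasDerivAt.fun_finsetProd (u := Finset.univ)
        (fun j _ => (hν_x j x t hxt).hasDerivAt)
      refine h.congr_deriv ?_
      rw [Finset.mul_sum]
      refine Finset.sum_congr rfl fun j hj => ?_
      rw [← Finset.mul_prod_erase _ _ hj, smul_eq_mul]
      have := hν j x t hxt
      simp only [pdx]
      field_simp
    have hd := ((S.hasDerivAt_vs hΩ hsys hxt).1.mul hprod).const_mul (2 * (-1 : ℂ) ^ n)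
    have hder : pdx (S.Hp 0) x t = _ :=
      (hd.congr_of_eventuallyEq (f₁ := fun x' => S.Hp 0 x' t) (by
        filter_upwards [hnear] with x' hx'
        exact hH0 x' hx')).deriv
    have heq := hsys.2.2.1 0 x t hxt
    rw [hder, hH0 x hxt] at heq
    generalize (∑ j, pdx (ν j) x t / ν j x t) = L at heq ⊢
    generalize (∏ j, ν j x t) = P at heq hP ⊢
    generalize ((-1 : ℂ) ^ n) = s at heq hsign ⊢
    have hx : pdx S.vs x t * P = S.vs x t *
        (2 * I * s * S.G 0 x t + (2 * I * S.v x t * S.vs x t - L) * P) := by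
      linear_combination (s / 2) * heq + (-(pdx S.vs x t * P) - S.vs x t * P * L
        + 2 * I * S.v x t * S.vs x t * (S.vs x t * P)) * hsign
    have hx' : pdx S.vs x t / S.vs x t
        = 2 * I * s * S.G 0 x t / P + (2 * I * S.v x t * S.vs x t - L) := by
      field_simp
      linear_combination hx
    rw [mul_div_assoc, hx']
    linear_combination (2 * s * S.G 0 x t / P + 2 * S.v x t * S.vs x t) * I_sq
  · intro x t hxt
    have h := hsys.2.2.2.2.2 0 x t hxt
    rw [hHfac 0 x t hxt] at h
    simp only [zero_sub, Finset.prod_neg, Finset.card_fin] at h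
    apply mul_left_cancel₀ (mul_ne_zero (by norm_num : (4 : ℂ) ≠ 0) I_ne_zero)
    linear_combination -h
end
end

section
/- Let n ∈ ℕ, let R(z) be a fixed polynomial over ℂ, and let Ω ⊆ ℝ² be open. Let v, v⁎ : Ω → ℂ with v nonvanishing and v differentiable, let μ₁,…,μ_n : Ω → ℂ be differentiable and pairwise distinct on Ω, and let ŷ₁,…,ŷ_n : Ω → ℂ satisfy ŷ_j(x,t)² = R(μ_j(x,t)) on Ω. Define F(z,x,t) = −2 v(x,t) ∏_{j=1}^n (z − μ_j(x,t)) and define the z-polynomial G(z,x,t) of degree n+1 by G(z,x,t) = ( F_x(z,x,t) + 2i(v(x,t) v⁎(x,t) − z) F(z,x,t) ) / (4i v(x,t)). If the Dubrovin-type equations μ_{j,x}(x,t) · ∏_{ℓ≠j}(μ_j(x,t) − μ_ℓ(x,t)) = 2i ŷ_j(x,t) hold for j = 1,…,n on Ω, then G(μ_j(x,t), x, t) = ŷ_j(x,t) and G(μ_j(x,t), x, t)² − R(μ_j(x,t)) = 0 for all j and all (x,t) ∈ Ω. -/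
/-!
At `z = μ_j(x,t)` the factor `z - μ_j` of `F = -2v ∏ (z - μ_ℓ)` vanishes, so the term containing `F`
drops out of `G`, and by the product rule the only surviving term of `F_x` is the one that
differentiates this factor: `F_x(μ_j) = 2v μ_{j,x} ∏_{ℓ≠j} (μ_j - μ_ℓ)`. The Dubrovin equation turns
it into `4iv ŷ_j`, whence `G(μ_j) = ŷ_j`.
-/

noncomputable section

open Complex

/-- Product rule at a zero of the first factor. -/
theorem deriv_mul_of_left_eq_zero {a b : ℝ → ℂ} {x : ℝ} (ha : DifferentiableAt ℝ a x)
    (hb : DifferentiableAt ℝ b x) (h0 : a x = 0) :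
    deriv (fun y => a y * b y) x = deriv a x * b x := by
  rw [deriv_fun_mul ha hb, h0, zero_mul, add_zero]

/-- step (S2) of the algebro-geometric initial value problem.
Given `F(z,x,t) = -2v ∏_j (z - μ_j)` and
`G = (F_x + 2i(v v⁎ - z)F)/(4iv)`, the Dubrovin-type equations
`μ_{j,x} ∏_{ℓ≠j}(μ_j - μ_ℓ) = 2i yh_j` imply `G(μ_j) = yh_j` and
`G(μ_j)² - R(μ_j) = 0`. -/
theorem statement15 (n : ℕ) (hn : 0 < n) (R : Polynomial ℂ)
    (Ω : Set (ℝ × ℝ)) (hΩ : IsOpen Ω)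
    (v vs : ℝ → ℝ → ℂ)
    (hv : ∀ x t : ℝ, (x, t) ∈ Ω → v x t ≠ 0)
    (hv_x : ∀ x t : ℝ, (x, t) ∈ Ω → DifferentiableAt ℝ (fun x' => v x' t) x)
    (μ : Fin n → ℝ → ℝ → ℂ)
    (hμ_x : ∀ (j : Fin n) (x t : ℝ), (x, t) ∈ Ω →
      DifferentiableAt ℝ (fun x' => μ j x' t) x)
    (hdist : ∀ j k : Fin n, j ≠ k → ∀ x t : ℝ, (x, t) ∈ Ω → μ j x t ≠ μ k x t)
    (yh : Fin n → ℝ → ℝ → ℂ)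
    (hyh : ∀ (j : Fin n) (x t : ℝ), (x, t) ∈ Ω → yh j x t ^ 2 = R.eval (μ j x t))
    (F G : ℂ → ℝ → ℝ → ℂ)
    (hF : ∀ (z : ℂ) (x t : ℝ), F z x t = -2 * v x t * ∏ j, (z - μ j x t))
    (hG : ∀ (z : ℂ) (x t : ℝ), G z x t =
      (deriv (fun x' => F z x' t) x + 2 * I * (v x t * vs x t - z) * F z x t)
        / (4 * I * v x t))
    (hdub : ∀ (j : Fin n) (x t : ℝ), (x, t) ∈ Ω →
      deriv (fun x' => μ j x' t) x * ∏ ℓ ∈ Finset.univ.erase j, (μ j x t - μ ℓ x t)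
        = 2 * I * yh j x t) :
    ∀ (j : Fin n) (x t : ℝ), (x, t) ∈ Ω →
      G (μ j x t) x t = yh j x t ∧
      G (μ j x t) x t ^ 2 - R.eval (μ j x t) = 0 := by
  intro j x t hxt
  have hvx := hv x t hxt
  have hF0 : F (μ j x t) x t = 0 := by
    rw [hF, Finset.prod_eq_zero (Finset.mem_univ j) (sub_self _), mul_zero]
  have hsplit : (fun x' => F (μ j x t) x' t) = fun x' => (μ j x t - μ j x' t) *
      (-2 * v x' t * ∏ ℓ ∈ Finset.univ.erase j, (μ j x t - μ ℓ x' t)) := by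
    funext x'
    rw [hF, ← Finset.mul_prod_erase _ _ (Finset.mem_univ j)]
    ring
  have hrest : DifferentiableAt ℝ (fun x' => -2 * v x' t *
      ∏ ℓ ∈ Finset.univ.erase j, (μ j x t - μ ℓ x' t)) x :=
    ((hv_x x t hxt).const_mul _).mul
      (DifferentiableAt.fun_finsetProd fun ℓ _ => (hμ_x ℓ x t hxt).const_sub _)
  have hFx : deriv (fun x' => F (μ j x t) x' t) x = 4 * I * v x t * yh j x t := by
    rw [hsplit, deriv_mul_of_left_eq_zero ((hμ_x j x t hxt).const_sub _) hrest (sub_self _),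
      deriv_const_sub]
    linear_combination 2 * v x t * hdub j x t hxt
  have hGy : G (μ j x t) x t = yh j x t := by
    rw [hG, hFx, hF0, mul_zero, add_zero]
    exact mul_div_cancel_left₀ _ (by simp [hvx])
  exact ⟨hGy, by rw [hGy, hyh j x t hxt, sub_self]⟩
end
end

section
/- Let n ∈ ℕ, let E₀,…,E_{2n+1} ∈ ℂ\{0}, set R(z) = ∏_{m=0}^{2n+1}(z − E_m), and let g_{n+1} ∈ ℂ satisfy g_{n+1}² = ∏_{m=0}^{2n+1} E_m. Let Ω ⊆ ℝ² be open, let v, v⁎ : Ω → ℂ with v nonvanishing and differentiable, and let μ₁,…,μ_n : Ω → ℂ\{0} be differentiable and pairwise distinct on Ω. Define F(z,x,t) = −2 v(x,t) ∏_{j=1}^n (z − μ_j(x,t)) and G(z,x,t) = ( F_x(z,x,t) + 2i(v(x,t) v⁎(x,t) − z) F(z,x,t) ) / (4i v(x,t)). If the trace formula i v_x/v − 2 v v⁎ = −i Σ_{j=1}^n μ_{j,x}/μ_j + 2 (−1)^n g_{n+1} / ∏_{j=1}^n μ_j holds on Ω, then G(0,x,t) = g_{n+1} for all (x,t) ∈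 Ω, and hence G(0,x,t)² − R(0) = 0 on Ω. -/
/-!
At `z = 0` the polynomial `F` is `-2 (-1)^n v ∏ μ_j`, and logarithmic differentiation in `x` gives
`F_x(0) = F(0) (v_x / v + ∑ μ_{j,x} / μ_j)`. Hence
`G(0) = F(0) (v_x / v + ∑ μ_{j,x} / μ_j + 2 i v v⁎) / (4 i v)`, and by the trace formula the
bracket equals `-2 i (-1)^n g / ∏ μ_j`, so that `G(0) = g`. Finally `R(0) = ∏ E_m = g²` because
the number `2n + 2` of factors is even.
-/

noncomputable section

open Complex

/-- step (S3) of the algebro-geometric initial value problem.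
With `F(z,x,t) = -2v ∏_j (z - μ_j)` and `G = (F_x + 2i(v v⁎ - z)F)/(4iv)`,
the trace formula
`i v_x/v - 2 v v⁎ = -i Σ_j μ_{j,x}/μ_j + 2 (-1)^n g_{n+1}/∏_j μ_j`
implies `G(0,x,t) = g_{n+1}` and hence `G(0,x,t)² - R(0) = 0`, where
`R(z) = ∏_{m=0}^{2n+1} (z - E_m)` and `g_{n+1}² = ∏_m E_m`. -/
theorem statement16 (n : ℕ) (hn : 0 < n) (E : Fin (2 * n + 2) → ℂ)
    (hE : ∀ m, E m ≠ 0)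
    (g : ℂ) (hg : g ^ 2 = ∏ m, E m)
    (Ω : Set (ℝ × ℝ)) (hΩ : IsOpen Ω)
    (v vs : ℝ → ℝ → ℂ)
    (hv : ∀ x t : ℝ, (x, t) ∈ Ω → v x t ≠ 0)
    (hv_x : ∀ x t : ℝ, (x, t) ∈ Ω → DifferentiableAt ℝ (fun x' => v x' t) x)
    (μ : Fin n → ℝ → ℝ → ℂ)
    (hμ_x : ∀ (j : Fin n) (x t : ℝ), (x, t) ∈ Ω →
      DifferentiableAt ℝ (fun x' => μ j x' t) x)
    (hμ0 : ∀ (j : Fin n) (x t : ℝ), (x, t) ∈ Ω → μ j x t ≠ 0)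
    (hdist : ∀ j k : Fin n, j ≠ k → ∀ x t : ℝ, (x, t) ∈ Ω → μ j x t ≠ μ k x t)
    (F G : ℂ → ℝ → ℝ → ℂ)
    (hF : ∀ (z : ℂ) (x t : ℝ), F z x t = -2 * v x t * ∏ j, (z - μ j x t))
    (hG : ∀ (z : ℂ) (x t : ℝ), G z x t =
      (deriv (fun x' => F z x' t) x + 2 * I * (v x t * vs x t - z) * F z x t)
        / (4 * I * v x t))
    (htrace : ∀ x t : ℝ, (x, t) ∈ Ω →
      I * deriv (fun x' => v x' t) x / v x t - 2 * v x t * vs x t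
        = -I * ∑ j, deriv (fun x' => μ j x' t) x / μ j x t
          + 2 * (-1 : ℂ) ^ n * g / ∏ j, μ j x t) :
    ∀ x t : ℝ, (x, t) ∈ Ω →
      G 0 x t = g ∧ G 0 x t ^ 2 - (∏ m, ((0 : ℂ) - E m)) = 0 := by
  intro x t hx
  have hv0 := hv x t hx
  have hP : ∏ j, μ j x t ≠ 0 := Finset.prod_ne_zero_iff.2 fun j _ => hμ0 j x t hx
  have hdP : DifferentiableAt ℝ (fun x' => ∏ j, μ j x' t) x :=
    DifferentiableAt.fun_finsetProd fun j _ => hμ_x j x t hx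
  have hlog : deriv (fun x' => ∏ j, μ j x' t) x
      = (∏ j, μ j x t) * ∑ j, deriv (fun x' => μ j x' t) x / μ j x t := by
    have h := logDeriv_prod (s := Finset.univ) (f := fun j x' => μ j x' t) (x := x)
      (fun j _ => hμ0 j x t hx) (fun j _ => hμ_x j x t hx)
    simp only [logDeriv_apply] at h
    rw [← h]
    field_simp
  have hF0 : ∀ x', F 0 x' t = -2 * (-1) ^ n * (v x' t * ∏ j, μ j x' t) := by
    intro x'
    rw [hF]
    simp only [zero_sub, Finset.prod_neg, Finset.card_univ, Fintype.card_fin]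
    ring
  have hFx : deriv (fun x' => F 0 x' t) x = -2 * (-1) ^ n *
      (deriv (fun x' => v x' t) x * (∏ j, μ j x t) + v x t * ((∏ j, μ j x t) *
        ∑ j, deriv (fun x' => μ j x' t) x / μ j x t)) := by
    simp only [hF0]
    rw [← hlog]
    exact (((hv_x x t hx).hasDerivAt.mul hdP.hasDerivAt).const_mul _).deriv
  have hsq : ((-1 : ℂ) ^ n) ^ 2 = 1 := by rw [← pow_mul, mul_comm, pow_mul]; simp
  have hG0 : G 0 x t = g := by
    have ht := htrace x t hx
    rw [hG, hFx, hF0]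
    generalize (∑ j, deriv (fun x' => μ j x' t) x / μ j x t) = S at *
    generalize (∏ j, μ j x t) = P at *
    generalize deriv (fun x' => v x' t) x = w at *
    generalize ((-1 : ℂ) ^ n) = e at *
    field_simp at ht
    rw [div_eq_iff (by simp [hv0])]
    linear_combination (2 * I * e) * ht + (4 * I * v x t * g) * hsq
      - 2 * e * P * (w + v x t * S) * (I_sq)
  refine ⟨hG0, ?_⟩
  rw [hG0, hg]
  simp [zero_sub, Finset.prod_neg, pow_add, pow_mul]
end
end

section
/- Let E₀, E₁ ∈ ℂ\{0} and let g₁ ∈ ℂ satisfy g₁² = E₀E₁ with g₁ ≠ 0. Set c₁ = −(E₀ + E₁)/2, ω₁^∞ = (g₁ + c₁)/2, and ω₁⁰ = −ω₁^∞/(E₀E₁). Fix (x₀,t₀) ∈ ℝ² and v₀, v₀⁎ ∈ ℂ with v₀ v₀⁎ = (c₁ − g₁)/2, and define on ℝ²: v(x,t) = v₀ exp(−2i(ω₁^∞ (x − x₀) − ω₁⁰ (t − t₀))), v⁎(x,t) = v₀⁎ exp(2i(ω₁^∞ (x − x₀) − ω₁⁰ (t − t₀))), u = v/g₁, and u⁎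 = v⁎/g₁. Then v(x,t) v⁎(x,t) = (c₁ − g₁)/2 and u(x,t) u⁎(x,t) = (c₁ − g₁)/(2g₁²) for all (x,t), and (u, v, u⁎, v⁎) satisfies the classical massive Thirring system on ℝ²: −i u_x + 2v + 2 v v⁎ u = 0, i u⁎_x + 2v⁎ + 2 v v⁎ u⁎ = 0, −i v_t + 2u + 2 u u⁎ v = 0, i v⁎_t + 2u⁎ + 2 u u⁎ v⁎ = 0. -/
/-!
The fields are plane waves with phase `θ = ωi (x - x₀) - ωo (t - t₀)`: `v`, `u` carry
`exp (-2iθ)` and `vs`, `us` carry `exp (2iθ)`. The exponentials cancel in `v * vs` and `u * us`, so these products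
are constant, and each equation of the system becomes a scalar dispersion relation times the
field. With `2 ωi = g₁ + c₁` and `2 ωo = -(g₁ + c₁) / g₁ ^ 2`, all four relations reduce to
`-(g₁ + c₁) + 2 g₁ + (c₁ - g₁) = 0`. The derivatives are computed in `hasDerivAt_planeWave`.
-/

noncomputable section

open Complex

theorem hasDerivAt_planeWave (A k a b : ℂ) (s₀ s : ℝ) :
    HasDerivAt (fun s' : ℝ => A * Complex.exp (k * (a * ((s' : ℂ) - (s₀ : ℂ)) + b)))
      (k * a * (A * Complex.exp (k * (a * ((s : ℂ) - (s₀ : ℂ)) + b)))) s := by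
  have h₀ : HasDerivAt (fun s' : ℝ => (s' : ℂ)) 1 s := Complex.ofRealCLM.hasDerivAt
  have h := ((((h₀.sub_const (s₀ : ℂ)).const_mul a).add_const b).const_mul k).cexp.const_mul A
  exact h.congr_deriv (by ring)

/-- the genus zero (n = 0) algebro-geometric solution of the
classical massive Thirring system associated with the curve
`y² = (z - E₀)(z - E₁)`. -/
theorem statement19 (E₀ E₁ : ℂ) (hE₀ : E₀ ≠ 0) (hE₁ : E₁ ≠ 0)
    (g₁ : ℂ) (hg₁sq : g₁ ^ 2 = E₀ * E₁) (hg₁ : g₁ ≠ 0)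
    (c₁ ωi ωo : ℂ)
    (hc₁ : c₁ = -(E₀ + E₁) / 2)
    (hωi : ωi = (g₁ + c₁) / 2)
    (hωo : ωo = -ωi / (E₀ * E₁))
    (x₀ t₀ : ℝ) (v₀ vs₀ : ℂ) (hv₀ : v₀ * vs₀ = (c₁ - g₁) / 2)
    (v vs u us : ℝ → ℝ → ℂ)
    (hv : ∀ x t : ℝ, v x t =
      v₀ * Complex.exp (-2 * I * (ωi * ((x : ℂ) - (x₀ : ℂ)) - ωo * ((t : ℂ) - (t₀ : ℂ)))))
    (hvs : ∀ x t : ℝ, vs x t =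
      vs₀ * Complex.exp (2 * I * (ωi * ((x : ℂ) - (x₀ : ℂ)) - ωo * ((t : ℂ) - (t₀ : ℂ)))))
    (hu : ∀ x t : ℝ, u x t = v x t / g₁)
    (hus : ∀ x t : ℝ, us x t = vs x t / g₁) :
    (∀ x t : ℝ, v x t * vs x t = (c₁ - g₁) / 2) ∧
    (∀ x t : ℝ, u x t * us x t = (c₁ - g₁) / (2 * g₁ ^ 2)) ∧
    (∀ x t : ℝ, -I * pdx u x t + 2 * v x t + 2 * v x t * vs x t * u x t = 0) ∧
    (∀ x t : ℝ, I * pdx us x t + 2 * vs x t + 2 * v x t * vs x t * us x t = 0) ∧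
    (∀ x t : ℝ, -I * pdt v x t + 2 * u x t + 2 * u x t * us x t * v x t = 0) ∧
    (∀ x t : ℝ, I * pdt vs x t + 2 * us x t + 2 * u x t * us x t * vs x t = 0) := by
  have hprod : ∀ x t : ℝ, v x t * vs x t = (c₁ - g₁) / 2 := by
    intro x t
    rw [hv, hvs, mul_mul_mul_comm, ← Complex.exp_add, hv₀]
    ring_nf
    simp
  have huprod : ∀ x t : ℝ, u x t * us x t = (c₁ - g₁) / (2 * g₁ ^ 2) := by
    intro x t
    rw [hu, hus, div_mul_div_comm, hprod]
    field_simp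
  have hux : ∀ x t : ℝ, pdx u x t = -2 * I * ωi * (v x t / g₁) := by
    intro x t
    have h := (hasDerivAt_planeWave v₀ (-2 * I) ωi (-(ωo * ((t : ℂ) - t₀))) x₀ x).div_const g₁
    simp only [← sub_eq_add_neg, ← hv, ← hu] at h
    rw [pdx, h.deriv, mul_div_assoc]
  have husx : ∀ x t : ℝ, pdx us x t = 2 * I * ωi * (vs x t / g₁) := by
    intro x t
    have h := (hasDerivAt_planeWave vs₀ (2 * I) ωi (-(ωo * ((t : ℂ) - t₀))) x₀ x).div_const g₁
    simp only [← sub_eq_add_neg, ← hvs, ← hus] at h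
    rw [pdx, h.deriv, mul_div_assoc]
  -- In the variable `t` the wave number is `-ωo`, and the `x` part of the phase is the constant.
  have hphase : ∀ x t : ℝ, -ωo * ((t : ℂ) - t₀) + ωi * ((x : ℂ) - x₀) =
      ωi * ((x : ℂ) - x₀) - ωo * ((t : ℂ) - t₀) := by
    intro x t
    ring
  have hvt : ∀ x t : ℝ, pdt v x t = -2 * I * -ωo * v x t := by
    intro x t
    have h := hasDerivAt_planeWave v₀ (-2 * I) (-ωo) (ωi * ((x : ℂ) - x₀)) t₀ t
    simp only [hphase, ← hv] at h
    rw [pdt, h.deriv]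
  have hvst : ∀ x t : ℝ, pdt vs x t = 2 * I * -ωo * vs x t := by
    intro x t
    have h := hasDerivAt_planeWave vs₀ (2 * I) (-ωo) (ωi * ((x : ℂ) - x₀)) t₀ t
    simp only [hphase, ← hvs] at h
    rw [pdt, h.deriv]
  rw [← hg₁sq, hωi] at hωo
  refine ⟨hprod, huprod, fun x t => ?_, fun x t => ?_, fun x t => ?_, fun x t => ?_⟩
  · rw [hux, mul_assoc 2 (v x t) (vs x t), hprod, hu, hωi]
    field_simp
    linear_combination v x t * (g₁ + c₁) * I_sq
  · rw [husx, mul_assoc 2 (v x t) (vs x t), hprod, hus, hωi]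
    field_simp
    linear_combination vs x t * (g₁ + c₁) * I_sq
  · rw [hvt, mul_assoc 2 (u x t) (us x t), huprod, hu, hωo]
    field_simp
    linear_combination v x t * (g₁ + c₁) * I_sq
  · rw [hvst, mul_assoc 2 (u x t) (us x t), huprod, hus, hωo]
    field_simp
    linear_combination vs x t * (g₁ + c₁) * I_sq
end
end
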